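/- Let R_1, …, R_n be a side-attachment sequence of axis-parallel rectangles. Then every point p ∈ ℝ² belongs to at most three of the rectangles R_j. In particular the rectangular tiling (R_1,…,R_n) of U_n = R_1 ∪ ⋯ ∪ R_n is generic: it has only 3-joints, i.e., no point belongs to four or more of the rectangles. -/

import Mathlib

/-!
Rectangles containing a point `p` that do not overlap reach into different quadrants at `p`, while
all the rectangles at `p` lying in a rectangle `U` with `p` on one of its sides reach into the same
half-plane. So `p` lies in at most two of the latter. Now let `m` be the last rectangle containing
`p`, let `k` be the last but one, and let `U` be the union of the rectangles up to `k`. Since `R m`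
does not overlap `U`, the point `p` lies on a side of `U`, so at most two rectangles other than
`R m` contain it.
-/

open Set

/-- An axis-parallel rectangle `[x1,x2] × [y1,y2]` with `x1 < x2` and `y1 < y2`. -/
structure Rect where
  x1 : ℝ
  x2 : ℝ
  y1 : ℝ
  y2 : ℝ
  hx : x1 < x2
  hy : y1 < y2

namespace Rect

/-- The rectangle as a subset of the plane. -/
def toSet (R : Rect) : Set (ℝ × ℝ) := Set.Icc R.x1 R.x2 ×ˢ Set.Icc R.y1 R.y2

/-- The area of the rectangle. -/
noncomputable def area (R : Rect) : ℝ := (R.x2 - R.x1) * (R.y2 - R.y1)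

end Rect

/-- Vertical closed segment `{x} × [c,d]`. -/
def vseg (x c d : ℝ) : Set (ℝ × ℝ) := ({x} : Set ℝ) ×ˢ Set.Icc c d

/-- Horizontal closed segment `[a,b] × {y}`. -/
def hseg (a b y : ℝ) : Set (ℝ × ℝ) := Set.Icc a b ×ˢ ({y} : Set ℝ)

/-- Relative interior of a vertical segment. -/
def vsegOpen (x c d : ℝ) : Set (ℝ × ℝ) := ({x} : Set ℝ) ×ˢ Set.Ioo c d

/-- Relative interior of a horizontal segment. -/
def hsegOpen (a b y : ℝ) : Set (ℝ × ℝ) := Set.Ioo a b ×ˢ ({y} : Set ℝ)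

/-- `S` is one of the four sides of the rectangle `R`. -/
def Rect.IsSide (R : Rect) (S : Set (ℝ × ℝ)) : Prop :=
  S = vseg R.x1 R.y1 R.y2 ∨ S = vseg R.x2 R.y1 R.y2 ∨
  S = hseg R.x1 R.x2 R.y1 ∨ S = hseg R.x1 R.x2 R.y2

/-- A rectangular tiling: a finite family of axis-parallel rectangles with pairwise
disjoint interiors whose union is an axis-parallel rectangle `F`. -/
structure Tiling (I : Type*) [Fintype I] where
  R : I → Rect
  F : Rect
  disj : Pairwise fun i j => interior ((R i).toSet) ∩ interior ((R j).toSet) = ∅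
  union : (⋃ i, (R i).toSet) = F.toSet

variable {I : Type*} [Fintype I]

/-- An internal line segment of a tiling: a horizontal or vertical closed segment of
positive length contained in the union of the boundaries of the rectangles, whose
relative interior lies in the topological interior of the bounding rectangle. -/
def IsInternalSeg (T : Tiling I) (S : Set (ℝ × ℝ)) : Prop :=
  (∃ x c d : ℝ, c < d ∧ S = vseg x c d ∧
      S ⊆ (⋃ i, frontier ((T.R i).toSet)) ∧ vsegOpen x c d ⊆ interior T.F.toSet) ∨
  (∃ a b y : ℝ, a < b ∧ S = hseg a b y ∧
      S ⊆ (⋃ i, frontier ((T.R i).toSet)) ∧ hsegOpen a b y ⊆ interior T.F.toSet)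

/-- A maximal internal line segment: an internal segment not properly contained in
any other internal segment. -/
def IsMaxInternalSeg (T : Tiling I) (S : Set (ℝ × ℝ)) : Prop :=
  IsInternalSeg T S ∧ ∀ S', IsInternalSeg T S' → S ⊆ S' → S' = S

/-- `A ∩ B` is a vertical segment of positive length with `A` lying to the left of `B`. -/
def LeftAdj (A B : Rect) : Prop :=
  A.x2 = B.x1 ∧ ∃ c d : ℝ, c < d ∧ A.toSet ∩ B.toSet = vseg A.x2 c d

/-- `A ∩ B` is a horizontal segment of positive length with `A` lying below `B`. -/
def BelowAdj (A B : Rect) : Prop :=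
  A.y2 = B.y1 ∧ ∃ a b : ℝ, a < b ∧ A.toSet ∩ B.toSet = hseg a b A.y2

/-- `A` meets the left side of `F` in a segment of positive length. -/
def MeetsLeftSide (A F : Rect) : Prop :=
  ∃ c d : ℝ, c < d ∧ A.toSet ∩ vseg F.x1 F.y1 F.y2 = vseg F.x1 c d

/-- `A` meets the right side of `F` in a segment of positive length. -/
def MeetsRightSide (A F : Rect) : Prop :=
  ∃ c d : ℝ, c < d ∧ A.toSet ∩ vseg F.x2 F.y1 F.y2 = vseg F.x2 c d

/-- `A` meets the bottom side of `F` in a segment of positive length. -/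
def MeetsBottomSide (A F : Rect) : Prop :=
  ∃ a b : ℝ, a < b ∧ A.toSet ∩ hseg F.x1 F.x2 F.y1 = hseg a b F.y1

/-- `A` meets the top side of `F` in a segment of positive length. -/
def MeetsTopSide (A F : Rect) : Prop :=
  ∃ a b : ℝ, a < b ∧ A.toSet ∩ hseg F.x1 F.x2 F.y2 = hseg a b F.y2

/-- Two tilings indexed by the same finite set are weakly equivalent. -/
def WeakEquiv (T T' : Tiling I) : Prop :=
  (∀ i j : I, LeftAdj (T.R i) (T.R j) ↔ LeftAdj (T'.R i) (T'.R j)) ∧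
  (∀ i j : I, BelowAdj (T.R i) (T.R j) ↔ BelowAdj (T'.R i) (T'.R j)) ∧
  (∀ i : I, MeetsLeftSide (T.R i) T.F ↔ MeetsLeftSide (T'.R i) T'.F) ∧
  (∀ i : I, MeetsRightSide (T.R i) T.F ↔ MeetsRightSide (T'.R i) T'.F) ∧
  (∀ i : I, MeetsTopSide (T.R i) T.F ↔ MeetsTopSide (T'.R i) T'.F) ∧
  (∀ i : I, MeetsBottomSide (T.R i) T.F ↔ MeetsBottomSide (T'.R i) T'.F)

/-- A tiling is area-universal if every assignment of positive areas to the rectangles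
is realized by a weakly equivalent tiling. -/
def AreaUniversal (T : Tiling I) : Prop :=
  ∀ w : I → ℝ, (∀ i, 0 < w i) → ∃ T' : Tiling I, WeakEquiv T T' ∧ ∀ i, (T'.R i).area = w i

/-- A tiling is generic if no point belongs to four or more of the rectangles. -/
def Generic (T : Tiling I) : Prop :=
  ∀ p : ℝ × ℝ, ∀ s : Finset I, (∀ i ∈ s, p ∈ (T.R i).toSet) → s.card ≤ 3

/-- A side-attachment sequence: rectangles with pairwise disjoint interiors such that
every partial union `U_j = R_0 ∪ ⋯ ∪ R_j` is an axis-parallel rectangle. -/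
def SideAttachSeq {n : ℕ} (R : Fin n → Rect) : Prop :=
  (Pairwise fun i j => interior ((R i).toSet) ∩ interior ((R j).toSet) = ∅) ∧
  ∀ j : Fin n, ∃ U : Rect, (⋃ i ∈ Set.Iic j, (R i).toSet) = U.toSet

theorem lt_right_iff_of_Icc_subset {α : Type*} [LinearOrder α] {a b u v x : α} (hab : a < b)
    (hsub : Icc a b ⊆ Icc u v) (hx : x ∉ Ioo u v) : x < b ↔ x < v := by
  obtain ⟨hua, hbv⟩ : u ≤ a ∧ b ≤ v := (Icc_subset_Icc_iff hab.le).1 hsub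
  grind

theorem Ioo_inter_Ioo_nonempty_of_lt_right_iff {α : Type*} [LinearOrder α] [DenselyOrdered α]
    {a b c d x : α} (hab : a < b) (hcd : c < d) (hx : x ∈ Icc a b) (hx' : x ∈ Icc c d)
    (h : x < b ↔ x < d) : (Ioo a b ∩ Ioo c d).Nonempty := by
  rw [Ioo_inter_Ioo, nonempty_Ioo]
  grind

namespace Rect

variable {A B U : Rect} {p : ℝ × ℝ}

theorem interior_toSet (A : Rect) :
    interior A.toSet = Ioo A.x1 A.x2 ×ˢ Ioo A.y1 A.y2 := by
  rw [toSet, interior_prod_eq, interior_Icc, interior_Icc]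

theorem closure_interior_toSet (A : Rect) : closure (interior A.toSet) = A.toSet := by
  rw [interior_toSet, closure_prod_eq, closure_Ioo A.hx.ne, closure_Ioo A.hy.ne, toSet]

theorem disjoint_toSet_of_isOpen {V : Set (ℝ × ℝ)} (h : Disjoint (interior A.toSet) V)
    (hV : IsOpen V) : Disjoint A.toSet V :=
  A.closure_interior_toSet ▸ h.closure_left hV

theorem toSet_subset_toSet_iff :
    A.toSet ⊆ U.toSet ↔ Icc A.x1 A.x2 ⊆ Icc U.x1 U.x2 ∧ Icc A.y1 A.y2 ⊆ Icc U.y1 U.y2 :=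
  prod_subset_prod_iff' ((nonempty_Icc.2 A.hx.le).prod (nonempty_Icc.2 A.hy.le))

/-- A quadrant at `p` into which a rectangle `A` containing `p` reaches. The first component is
`true` for right and the second is `true` for up; if `A` reaches both ways, `true` is chosen. -/
noncomputable def quadrant (A : Rect) (p : ℝ × ℝ) : Bool × Bool :=
  (decide (p.1 < A.x2), decide (p.2 < A.y2))

theorem quadrant_ne_of_disjoint_interior (hA : p ∈ A.toSet) (hB : p ∈ B.toSet)
    (h : Disjoint (interior A.toSet) (interior B.toSet)) : A.quadrant p ≠ B.quadrant p := by
  intro hq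
  simp only [quadrant, Prod.mk.injEq, decide_eq_decide] at hq
  refine not_disjoint_iff_nonempty_inter.2 ?_ h
  rw [interior_toSet, interior_toSet, prod_inter_prod]
  exact (Ioo_inter_Ioo_nonempty_of_lt_right_iff A.hx B.hx hA.1 hB.1 hq.1).prod
    (Ioo_inter_Ioo_nonempty_of_lt_right_iff A.hy B.hy hA.2 hB.2 hq.2)

theorem quadrant_fst_eq_of_subset (hAU : A.toSet ⊆ U.toSet) (hp : p.1 ∉ Ioo U.x1 U.x2) :
    (A.quadrant p).1 = (U.quadrant p).1 :=
  decide_eq_decide.2 <| lt_right_iff_of_Icc_subset A.hx (toSet_subset_toSet_iff.1 hAU).1 hp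

theorem quadrant_snd_eq_of_subset (hAU : A.toSet ⊆ U.toSet) (hp : p.2 ∉ Ioo U.y1 U.y2) :
    (A.quadrant p).2 = (U.quadrant p).2 :=
  decide_eq_decide.2 <| lt_right_iff_of_Icc_subset A.hy (toSet_subset_toSet_iff.1 hAU).2 hp

theorem card_le_two_of_notMem_interior {ι : Type*} {R : ι → Rect} {s : Finset ι}
    (hdisj : (s : Set ι).PairwiseDisjoint fun i ↦ interior (R i).toSet)
    (hs : ∀ i ∈ s, p ∈ (R i).toSet) (hsU : ∀ i ∈ s, (R i).toSet ⊆ U.toSet)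
    (hp : p ∉ interior U.toSet) : s.card ≤ 2 := by
  have quadrant_injOn : InjOn (fun i ↦ (R i).quadrant p) s := fun i hi j hj hij ↦
    by_contra fun hne ↦
      quadrant_ne_of_disjoint_interior (hs i hi) (hs j hj) (hdisj hi hj hne) hij
  have card_le (f : ι → Bool) (hf : InjOn f s) : s.card ≤ 2 :=
    Finset.card_le_card_of_injOn f (fun i _ ↦ Finset.mem_univ (f i)) hf
  rw [interior_toSet, mem_prod, not_and_or] at hp
  rcases hp with hx | hy
  · refine card_le (fun i ↦ ((R i).quadrant p).2) fun i hi j hj hij ↦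
      quadrant_injOn hi hj (Prod.ext ?_ hij)
    exact (quadrant_fst_eq_of_subset (hsU i hi) hx).trans
      (quadrant_fst_eq_of_subset (hsU j hj) hx).symm
  · refine card_le (fun i ↦ ((R i).quadrant p).1) fun i hi j hj hij ↦
      quadrant_injOn hi hj (Prod.ext hij ?_)
    exact (quadrant_snd_eq_of_subset (hsU i hi) hy).trans
      (quadrant_snd_eq_of_subset (hsU j hj) hy).symm

theorem notMem_interior_biUnion {ι : Type*} {R : ι → Rect} {t : Set ι}
    (hdisj : ∀ i ∈ t, Disjoint (interior (R i).toSet) (interior B.toSet)) (hp : p ∈ B.toSet) :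
    p ∉ interior (⋃ i ∈ t, (R i).toSet) := by
  have union_disjoint : Disjoint (⋃ i ∈ t, (R i).toSet) (interior B.toSet) :=
    disjoint_iUnion₂_left.2 fun i hi ↦ disjoint_toSet_of_isOpen (hdisj i hi) isOpen_interior
  have disjoint_union : Disjoint B.toSet (interior (⋃ i ∈ t, (R i).toSet)) :=
    disjoint_toSet_of_isOpen (union_disjoint.mono_left interior_subset).symm isOpen_interior
  exact disjoint_left.1 disjoint_union hp

end Rect

theorem sideAttachSeq_point_in_at_most_three_general {ι : Type*} [LinearOrder ι] {R : ι → Rect}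
    (hdisj : Pairwise fun i j ↦ Disjoint (interior (R i).toSet) (interior (R j).toSet))
    (hunion : ∀ j, ∃ U : Rect, (⋃ i ∈ Iic j, (R i).toSet) = U.toSet)
    (p : ℝ × ℝ) (s : Finset ι) (hs : ∀ i ∈ s, p ∈ (R i).toSet) : s.card ≤ 3 := by
  rcases s.eq_empty_or_nonempty with rfl | hne
  · simp
  set m := s.max' hne
  have hm : m ∈ s := s.max'_mem hne
  suffices (s.erase m).card ≤ 2 by
    rw [Finset.card_erase_of_mem hm] at this
    lia
  rcases (s.erase m).eq_empty_or_nonempty with hempty | hne'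
  · simp [hempty]
  set k := (s.erase m).max' hne'
  have hkm : k < m := s.lt_max'_of_mem_erase_max' hne ((s.erase m).max'_mem hne')
  obtain ⟨U, hU⟩ := hunion k
  have hpU : p ∉ interior U.toSet :=
    hU ▸ Rect.notMem_interior_biUnion (fun i hi ↦ hdisj (hi.trans_lt hkm).ne) (hs m hm)
  refine Rect.card_le_two_of_notMem_interior (fun i _ j _ hij ↦ hdisj hij)
    (fun i hi ↦ hs i (Finset.mem_of_mem_erase hi)) (fun i hi ↦ ?_) hpU
  exact hU ▸ subset_biUnion_of_mem (u := fun i ↦ (R i).toSet) ((s.erase m).le_max' i hi)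

/-- In a side-attachment sequence, every point of the plane belongs to at
most three of the rectangles; in particular any tiling formed by these rectangles is
generic (only 3-joints occur). -/
theorem sideAttachSeq_point_in_at_most_three
    {n : ℕ} (R : Fin n → Rect) (h : SideAttachSeq R) :
    (∀ (p : ℝ × ℝ) (s : Finset (Fin n)), (∀ i ∈ s, p ∈ (R i).toSet) → s.card ≤ 3) ∧
    (∀ T : Tiling (Fin n), T.R = R → Generic T) := by
  have hcard := sideAttachSeq_point_in_at_most_three_general
    (h.1.mono fun _ _ ↦ disjoint_iff_inter_eq_empty.2) h.2
  exact ⟨hcard, fun T hT ↦ by subst hT; exact hcard⟩
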